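/- For every real γ > 0 and every graph H with at least one edge and chromatic number r, there exists n₀ ∈ ℕ such that for all integers n > n₀, IR(H, K_{1,n}) ≤ (r−1)²·n + γ·n. -/

import Mathlib

open SimpleGraph

def ArrowsInd {V α β : Type*} (F : SimpleGraph V) (H : SimpleGraph α) (G : SimpleGraph β) : Prop :=
  ∀ c : Sym2 V → Bool,
    (∃ f : H ↪g F, ∀ u v, H.Adj u v → c s(f u, f v) = true) ∨
    (∃ g : G ↪g F, ∀ u v, G.Adj u v → c s(g u, g v) = false)

noncomputable def IR {α β : Type*} (H : SimpleGraph α) (G : SimpleGraph β) : ℕ :=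
  sInf {N : ℕ | ∃ F : SimpleGraph (Fin N), ArrowsInd F H G}

def StarGraph (n : ℕ) : SimpleGraph (Fin 1 ⊕ Fin n) := completeBipartiteGraph (Fin 1) (Fin n)

/-!
Write `ρ = r - 1`. The host consists of `ρ` layers of slightly more than `ρ n` vertices each and one
layer of bounded size. Pairs in different layers are adjacent, except for those lying over a fixed
symmetric, regular and quasirandom relation of small density `1 / p`.

If there is no blue star, then every vertex has fewer than `n` blue neighbours in each large layer,
since a layer is independent; so it misses, in red, less than a `1 / ρ` fraction of that layer.
A greedy choice starting from the bounded layer shows that a positive proportion of the transversal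
`(ρ + 1)`-tuples are red cliques, and by convexity a positive proportion of their blow-ups are red
complete multipartite patterns. These contain the edges of `H`. The non-edges of `H` are imposed one
at a time: by quasirandomness, each costs a factor `1 / p` and a negligible error.
-/

section Expectation

open Finset Function
open scoped BigOperators

/-- The Iverson bracket of a proposition, as a real number; expectations of brackets are the
densities being counted. -/
noncomputable def iverson (p : Prop) : ℝ := open Classical in if p then 1 else 0

lemma iverson_of {p : Prop} (hp : p) : iverson p = 1 := if_pos hp

lemma iverson_of_not {p : Prop} (hp : ¬p) : iverson p = 0 := if_neg hp

lemma iverson_nonneg (p : Prop) : 0 ≤ iverson p := by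
  by_cases hp : p <;> simp [iverson, hp]

lemma iverson_mem_Icc (p : Prop) : iverson p ∈ Set.Icc 0 1 := by
  by_cases hp : p <;> simp [iverson, hp]

lemma iverson_le_of_imp {p : Prop} {x : ℝ} (hx : 0 ≤ x) (h : p → 1 ≤ x) : iverson p ≤ x := by
  by_cases hp : p <;> simp [iverson, hp, hx, h]

lemma iverson_not (p : Prop) : iverson (¬p) = 1 - iverson p := by
  by_cases hp : p <;> simp [iverson, hp]

lemma iverson_and (p q : Prop) : iverson (p ∧ q) = iverson p * iverson q := by
  by_cases hp : p <;> by_cases hq : q <;> simp [iverson, hp, hq]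

lemma iverson_forall {ι : Type*} [Fintype ι] (p : ι → Prop) :
    iverson (∀ i, p i) = ∏ i, iverson (p i) := by
  by_cases h : ∀ i, p i
  · simp [iverson_of, h]
  · obtain ⟨i, hi⟩ := not_forall.1 h
    rw [iverson_of_not h, prod_eq_zero (mem_univ i) (iverson_of_not hi)]

lemma expect_iverson_mem {α : Type*} [Fintype α] (s : Finset α) :
    𝔼 a, iverson (a ∈ s) = #s / Fintype.card α := by
  simp only [iverson, Fintype.expect_eq_sum_div_card]
  rw [sum_boole]
  congr
  ext a
  simp

lemma expect_iverson_eq {α : Type*} [Fintype α] (a : α) :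
    𝔼 b, iverson (a = b) = 1 / Fintype.card α := by
  simpa [eq_comm] using expect_iverson_mem {a}

lemma expect_prod_type {α β : Type*} [Fintype α] [Fintype β] (f : α × β → ℝ) :
    𝔼 p, f p = 𝔼 a, 𝔼 b, f (a, b) := by
  rw [← univ_product_univ, expect_product]

lemma expect_comp_fst {α β : Type*} [Fintype α] [Fintype β] [Nonempty β] (f : α → ℝ) :
    𝔼 p : α × β, f p.1 = 𝔼 a, f a := by
  rw [expect_prod_type]
  exact expect_congr rfl fun a _ => Fintype.expect_const (f a)

lemma expect_iverson_map_eq {G A : Type*} [AddGroup G] [AddMonoid A] [Fintype G] [Fintype A]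
    (φ : G →+ A) (hφ : Surjective φ) (x : A) :
    𝔼 g, iverson (φ g = x) = 1 / Fintype.card A := by
  classical
  have hfiber : Fintype.card G = Fintype.card A * #{g | φ g = x} := by
    rw [← card_univ, card_eq_sum_card_fiberwise (f := φ) (t := univ) (by simp),
      sum_congr rfl fun y _ => AddMonoidHom.card_fiber_eq_of_mem_range φ (hφ y) (hφ x),
      sum_const, smul_eq_mul, card_univ]
  have hG : (Fintype.card G : ℝ) ≠ 0 := by simp
  have hmem := expect_iverson_mem ({g | φ g = x} : Finset G)
  simp only [mem_filter_univ] at hmem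
  rw [hmem, hfiber, Nat.cast_mul, div_mul_cancel_right₀, one_div]
  rw [hfiber, Nat.cast_mul] at hG
  exact right_ne_zero_of_mul hG

lemma pow_expect_le_expect_pow {α : Type*} [Fintype α] [Nonempty α] {f : α → ℝ}
    (hf : ∀ a, 0 ≤ f a) (n : ℕ) : (𝔼 a, f a) ^ n ≤ 𝔼 a, f a ^ n := by
  simp only [Fintype.expect_eq_sum_div_card, div_eq_inv_mul, mul_sum]
  exact Real.pow_arith_mean_le_arith_mean_pow univ (fun _ => (Fintype.card α : ℝ)⁻¹) f
    (fun _ _ => by positivity) (by simp) (fun a _ => hf a) n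

lemma expect_prod_pi {Y S : Type*} [Fintype Y] [Fintype S] [DecidableEq S] (f : Y → ℝ) :
    𝔼 z : S → Y, ∏ s, f (z s) = (𝔼 y, f y) ^ Fintype.card S := by
  rw [Fintype.expect_eq_sum_div_card, Fintype.expect_eq_sum_div_card, div_pow, Fintype.card_fun,
    Nat.cast_pow, ← Fintype.piFinset_univ, ← prod_univ_sum, prod_const, card_univ]

lemma expect_finCons {t : ℕ} {Y : Fin (t + 1) → Type*} [∀ i, Fintype (Y i)]
    (f : (∀ i, Y i) → ℝ) : 𝔼 y, f y = 𝔼 b : ∀ i : Fin t, Y i.succ, 𝔼 a, f (Fin.cons a b) := by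
  rw [expect_comm, ← expect_prod_type fun p : Y 0 × (∀ i : Fin t, Y i.succ) => f (Fin.cons p.1 p.2)]
  exact (Fintype.expect_equiv (Fin.consEquiv Y) _ _ fun _ => rfl).symm

lemma expect_expect_update {ι : Type*} [Fintype ι] [DecidableEq ι] {Z : ι → Type*}
    [∀ i, Fintype (Z i)] [∀ i, Nonempty (Z i)] (u : ι) (f : (∀ i, Z i) → ℝ) :
    𝔼 z, 𝔼 a, f (update z u a) = 𝔼 z, f z := by
  have hswap : Involutive fun p : (∀ i, Z i) × Z u => (update p.1 u p.2, p.1 u) := fun p => by simp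
  rw [← expect_comp_fst (β := Z u) f,
    ← expect_prod_type fun p : (∀ i, Z i) × Z u => f (update p.1 u p.2)]
  exact Fintype.expect_equiv hswap.toPerm _ _ fun _ => rfl

end Expectation

section Cliques

open Finset Function
open scoped BigOperators

lemma one_sub_mul_le_expect_iverson_forall {Y : Type*} [Fintype Y] [Nonempty Y]
    {ι : Type*} [Fintype ι] {p : ι → Y → Prop} {θ : ℝ}
    (hp : ∀ i, 𝔼 y, iverson (¬p i y) ≤ θ) :
    1 - Fintype.card ι * θ ≤ 𝔼 y, iverson (∀ i, p i y) := by
  have hunion (y : Y) : 1 - ∑ i, iverson (¬p i y) ≤ iverson (∀ i, p i y) := by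
    by_cases h : ∀ i, p i y
    · simp [iverson, h]
    · obtain ⟨i, hi⟩ := not_forall.1 h
      have := single_le_sum (f := fun i => iverson (¬p i y)) (fun _ _ => iverson_nonneg _)
        (mem_univ i)
      linarith [iverson_of hi, iverson_nonneg (∀ i, p i y)]
  calc 1 - Fintype.card ι * θ ≤ 1 - ∑ i, 𝔼 y, iverson (¬p i y) := by
        have := sum_le_card_nsmul univ _ _ fun i _ => hp i
        rw [card_univ, nsmul_eq_mul] at this
        linarith
    _ = 𝔼 y, (1 - ∑ i, iverson (¬p i y)) := by
        rw [expect_sub_distrib, Fintype.expect_const, expect_sum_comm]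
    _ ≤ _ := expect_le_expect fun y _ => hunion y

/-- The vertices `y i` of the parts `Y i` form a clique for the relations `R i j`, `i < j`. -/
def IsTransversalClique {t : ℕ} {Y : Fin t → Type*} (R : ∀ i j, Y i → Y j → Prop)
    (y : ∀ i, Y i) : Prop :=
  ∀ i j, i < j → R i j (y i) (y j)

lemma isTransversalClique_finCons {t : ℕ} {Y : Fin (t + 1) → Type*}
    {R : ∀ i j, Y i → Y j → Prop} {a : Y 0} {b : ∀ i : Fin t, Y i.succ} :
    IsTransversalClique R (Fin.cons a b) ↔
      IsTransversalClique (fun i j => R i.succ j.succ) b ∧ ∀ j : Fin t, R 0 j.succ a (b j) := by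
  simp [IsTransversalClique, Fin.forall_fin_succ, and_comm]

lemma pow_le_expect_isTransversalClique {θ η : ℝ} (hη : 0 ≤ η) (hθ : 0 ≤ θ) {t : ℕ} :
    ∀ {Y : Fin t → Type*} [∀ i, Fintype (Y i)] [∀ i, Nonempty (Y i)]
      {R : ∀ i j, Y i → Y j → Prop}, (∀ i j, i < j → ∀ b, 𝔼 a, iverson (¬R i j a b) ≤ θ) →
      η ≤ 1 - ((t : ℝ) - 1) * θ → η ^ t ≤ 𝔼 y, iverson (IsTransversalClique R y) := by
  induction t with
  | zero =>
    intro Y _ _ R _ _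
    simp [IsTransversalClique, iverson_of]
  | succ t ih =>
    intro Y _ _ R hR ht
    rw [Nat.cast_succ, add_sub_cancel_right] at ht
    calc η ^ (t + 1)
        ≤ (𝔼 b, iverson (IsTransversalClique (fun i j => R i.succ j.succ) b)) * η := by
          rw [pow_succ]
          refine mul_le_mul_of_nonneg_right (ih (fun i j hij => hR _ _ ?_) (by linarith)) hη
          exact Fin.succ_lt_succ_iff.2 hij
      _ = 𝔼 b, iverson (IsTransversalClique (fun i j => R i.succ j.succ) b) * η := expect_mul ..
      _ ≤ 𝔼 b : ∀ i : Fin t, Y i.succ, 𝔼 a, iverson (IsTransversalClique R (Fin.cons a b)) := by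
          refine expect_le_expect fun b _ => ?_
          simp only [isTransversalClique_finCons, iverson_and, ← mul_expect]
          refine mul_le_mul_of_nonneg_left (ht.trans ?_) (iverson_nonneg _)
          simpa using one_sub_mul_le_expect_iverson_forall
            fun j : Fin t => hR 0 j.succ j.succ_pos (b j)
      _ = 𝔼 y, iverson (IsTransversalClique R y) := by
          rw [expect_finCons fun y => iverson (IsTransversalClique R y)]

lemma expect_prod_finCons {S : Type*} [Fintype S] [DecidableEq S] {t : ℕ}
    {Y : Fin (t + 1) → Type*} [∀ i, Fintype (Y i)] (w : (∀ i, Y i) → ℝ)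
    (z : ∀ i : Fin t, S → Y i.succ) :
    𝔼 a : S → Y 0, ∏ σ : Fin (t + 1) → S,
        w (fun i => (Fin.cons a z : ∀ i, S → Y i) i (σ i)) =
      (𝔼 a, ∏ σ : Fin t → S, w (Fin.cons a fun i => z i (σ i))) ^ Fintype.card S := by
  rw [← expect_prod_pi]
  refine expect_congr rfl fun a _ => ?_
  rw [← Fintype.prod_prod_type' fun s (σ : Fin t → S) => w (Fin.cons (a s) fun i => z i (σ i))]
  refine (Fintype.prod_equiv (Fin.consEquiv fun _ => S) _ _ fun ⟨s, σ⟩ => congrArg w ?_).symm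
  funext i
  cases i using Fin.cases <;> rfl

lemma pow_expect_le_expect_prod {S : Type*} [Fintype S] [DecidableEq S] {t : ℕ} :
    ∀ {Y : Fin t → Type*} [∀ i, Fintype (Y i)] [∀ i, Nonempty (Y i)] {w : (∀ i, Y i) → ℝ},
      (∀ y, 0 ≤ w y) → (𝔼 y, w y) ^ Fintype.card S ^ t ≤
        𝔼 z : ∀ i, S → Y i, ∏ σ : Fin t → S, w fun i => z i (σ i) := by
  induction t with
  | zero =>
    intro Y _ _ w _
    simp [Subsingleton.elim _ (default : ∀ i, Y i)]
  | succ t ih =>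
    intro Y _ _ w hw
    have hnn (a : Y 0) (b : ∀ i : Fin t, Y i.succ) : 0 ≤ w (Fin.cons a b) := hw _
    calc (𝔼 y, w y) ^ Fintype.card S ^ (t + 1)
        = ((𝔼 a, 𝔼 b : ∀ i : Fin t, Y i.succ, w (Fin.cons a b)) ^ Fintype.card S ^ t) ^
            Fintype.card S := by rw [expect_finCons, expect_comm, pow_succ, pow_mul]
      _ ≤ (𝔼 a, (𝔼 b : ∀ i : Fin t, Y i.succ, w (Fin.cons a b)) ^ Fintype.card S ^ t) ^
            Fintype.card S := by
          gcongr
          · exact pow_nonneg (expect_nonneg fun _ _ => expect_nonneg fun _ _ => hnn _ _) _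
          · exact pow_expect_le_expect_pow (fun a => expect_nonneg fun _ _ => hnn _ _) _
      _ ≤ (𝔼 a, 𝔼 z : ∀ i : Fin t, S → Y i.succ,
            ∏ σ : Fin t → S, w (Fin.cons a fun i => z i (σ i))) ^ Fintype.card S := by
          gcongr with a
          · exact expect_nonneg fun _ _ => pow_nonneg (expect_nonneg fun _ _ => hnn _ _) _
          · exact ih fun b => hnn a b
      _ = (𝔼 z : ∀ i : Fin t, S → Y i.succ, 𝔼 a,
            ∏ σ : Fin t → S, w (Fin.cons a fun i => z i (σ i))) ^ Fintype.card S := by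
          rw [expect_comm]
      _ ≤ 𝔼 z : ∀ i : Fin t, S → Y i.succ,
            (𝔼 a, ∏ σ : Fin t → S, w (Fin.cons a fun i => z i (σ i))) ^ Fintype.card S :=
          pow_expect_le_expect_pow
            (fun z => expect_nonneg fun _ _ => prod_nonneg fun _ _ => hnn _ _) _
      _ = _ := by rw [expect_finCons]; simp only [expect_prod_finCons]

end Cliques

section Quasirandom

open Finset Function
open scoped BigOperators

variable {X Y : Type*} [Fintype X] [Fintype Y]

/-- One-sided quasirandomness: every weighted rectangle `f × g` carries at least the share of the
kernel `K` predicted by the density `δ`, up to an additive error `κ`. -/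
def LowerQuasirandom (K : X → Y → ℝ) (δ κ : ℝ) : Prop :=
  ∀ (f : X → ℝ) (g : Y → ℝ), (∀ a, f a ∈ Set.Icc 0 1) → (∀ b, g b ∈ Set.Icc 0 1) →
    -κ ≤ 𝔼 a, 𝔼 b, f a * g b * (K a b - δ)

lemma expect_mem_Icc [Nonempty X] {f : X → ℝ} {a b : ℝ} (hf : ∀ x, f x ∈ Set.Icc a b) :
    𝔼 x, f x ∈ Set.Icc a b :=
  ⟨le_expect univ_nonempty fun x _ => (hf x).1, expect_le univ_nonempty fun x _ => (hf x).2⟩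

lemma mul_mem_Icc_zero_one {a b : ℝ} (ha : a ∈ Set.Icc 0 1) (hb : b ∈ Set.Icc 0 1) :
    a * b ∈ Set.Icc 0 1 :=
  ⟨mul_nonneg ha.1 hb.1, mul_le_one₀ ha.2 hb.1 hb.2⟩

lemma LowerQuasirandom.comp_fst {S T : Type*} [Fintype S] [Fintype T] [Nonempty S] [Nonempty T]
    {K : X → Y → ℝ} {δ κ : ℝ} (hK : LowerQuasirandom K δ κ) :
    LowerQuasirandom (fun (a : X × S) (b : Y × T) => K a.1 b.1) δ κ := by
  intro f g hf hg
  calc -κ ≤ 𝔼 x, 𝔼 y, (𝔼 s, f (x, s)) * (𝔼 t, g (y, t)) * (K x y - δ) :=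
        hK _ _ (fun _ => expect_mem_Icc fun _ => hf _) fun _ => expect_mem_Icc fun _ => hg _
    _ = 𝔼 x, 𝔼 s, 𝔼 y, 𝔼 t, f (x, s) * g (y, t) * (K x y - δ) := by
        refine expect_congr rfl fun x _ => ?_
        rw [expect_comm]
        refine expect_congr rfl fun y _ => ?_
        rw [expect_mul_expect, expect_mul]
        exact expect_congr rfl fun s _ => expect_mul ..
    _ = 𝔼 a : X × S, 𝔼 b : Y × T, f a * g b * (K a.1 b.1 - δ) := by simp only [expect_prod_type]

lemma lowerQuasirandom_ne [Nonempty X] {δ κ : ℝ} (hδ : δ ≤ 1) (hκ : 1 / Fintype.card X ≤ κ) :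
    LowerQuasirandom (fun a b : X => iverson (a ≠ b)) δ κ := by
  intro f g hf hg
  refine le_expect univ_nonempty fun a _ => ?_
  calc -κ ≤ -𝔼 b, iverson (a = b) := by rw [expect_iverson_eq]; exact neg_le_neg hκ
    _ = 𝔼 b, -iverson (a = b) := (expect_neg_distrib ..).symm
    _ ≤ _ := expect_le_expect fun b _ => ?_
  have hfg := mul_mem_Icc_zero_one (hf a) (hg b)
  simp only [ne_eq, iverson_not]
  nlinarith [mul_nonneg hfg.1 (sub_nonneg.2 hδ),
    mul_le_mul_of_nonneg_right hfg.2 (iverson_nonneg (a = b))]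

lemma lowerQuasirandom_of_codegree [Nonempty Y] {K : X → Y → ℝ} {δ κ : ℝ}
    {E : X → X → ℝ} (hκ : 0 ≤ κ) (hE : ∀ a a', 0 ≤ E a a')
    (hKE : ∀ a a', 𝔼 b, (K a b - δ) * (K a' b - δ) ≤ E a a') (hEκ : 𝔼 a, 𝔼 a', E a a' ≤ κ ^ 2) :
    LowerQuasirandom K δ κ := by
  intro f g hf hg
  have hmoment : 𝔼 b, (𝔼 a, f a * (K a b - δ)) ^ 2 ≤ κ ^ 2 :=
    calc 𝔼 b, (𝔼 a, f a * (K a b - δ)) ^ 2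
        = 𝔼 b, 𝔼 a, 𝔼 a', f a * f a' * ((K a b - δ) * (K a' b - δ)) := by
          simp only [sq, expect_mul_expect, mul_mul_mul_comm]
      _ = 𝔼 a, 𝔼 a', f a * f a' * 𝔼 b, (K a b - δ) * (K a' b - δ) := by
          rw [expect_comm]
          refine expect_congr rfl fun a _ => ?_
          rw [expect_comm]
          simp only [mul_expect]
      _ ≤ 𝔼 a, 𝔼 a', E a a' := by
          refine expect_le_expect fun a _ => expect_le_expect fun a' _ => ?_
          have hff := mul_mem_Icc_zero_one (hf a) (hf a')
          exact (mul_le_mul_of_nonneg_left (hKE a a') hff.1).trans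
            (mul_le_of_le_one_left (hE a a') hff.2)
      _ ≤ κ ^ 2 := hEκ
  have hrect : (𝔼 b, g b * 𝔼 a, f a * (K a b - δ)) ^ 2 ≤ κ ^ 2 :=
    calc (𝔼 b, g b * 𝔼 a, f a * (K a b - δ)) ^ 2
        ≤ (𝔼 b, g b ^ 2) * 𝔼 b, (𝔼 a, f a * (K a b - δ)) ^ 2 := expect_mul_sq_le_sq_mul_sq ..
      _ ≤ 1 * κ ^ 2 := by
          refine mul_le_mul ?_ hmoment (expect_nonneg fun _ _ => sq_nonneg _) zero_le_one
          exact expect_le univ_nonempty fun b _ => pow_le_one₀ (hg b).1 (hg b).2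
      _ = κ ^ 2 := one_mul _
  calc -κ ≤ 𝔼 b, g b * 𝔼 a, f a * (K a b - δ) := (abs_le_of_sq_le_sq' hrect hκ).1
    _ = 𝔼 a, 𝔼 b, f a * g b * (K a b - δ) := by
        simp only [mul_expect]
        rw [expect_comm]
        exact expect_congr rfl fun a _ => expect_congr rfl fun b _ => by ring

end Quasirandom

section Incidence

open Finset Function
open scoped BigOperators

variable {ι F : Type*} [Fintype ι] [Field F]

/-- The affine point–hyperplane incidence relation on `F^ι × F`: the vertical coordinate is shifted
so that the relation is symmetric and exactly regular. -/
def Incident (x y : (ι → F) × F) : Prop := x.1 ⬝ᵥ y.1 - y.2 = x.2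

lemma Incident.symm {x y : (ι → F) × F} (h : Incident x y) : Incident y x := by
  unfold Incident at *
  rw [dotProduct_comm, ← h, sub_sub_cancel]

/-- The functional whose fibres are the neighbourhoods of the points above `a`. -/
def incidenceHom (a : ι → F) : (ι → F) × F →+ F where
  toFun y := a ⬝ᵥ y.1 - y.2
  map_zero' := by simp
  map_add' y z := by simp only [Prod.fst_add, Prod.snd_add, dotProduct_add]; ring

lemma incidenceHom_surjective (a : ι → F) : Surjective (incidenceHom a) :=
  fun s => ⟨(0, -s), by simp [incidenceHom]⟩

lemma incidenceHom_prod_surjective {a a' : ι → F} (h : a ≠ a') :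
    Surjective ((incidenceHom a).prod (incidenceHom a')) := by
  classical
  obtain ⟨i, hi⟩ := Function.ne_iff.1 h
  rintro ⟨s, s'⟩
  refine ⟨(Pi.single i ((s - s') / (a i - a' i)), a i * ((s - s') / (a i - a' i)) - s), ?_⟩
  have hi' : a i - a' i ≠ 0 := sub_ne_zero.2 hi
  ext
  · simp [incidenceHom]
  · simp only [AddMonoidHom.prod_apply, incidenceHom, AddMonoidHom.coe_mk, ZeroHom.coe_mk,
      dotProduct_single]
    field_simp
    ring

variable [Fintype F] [DecidableEq ι]

lemma expect_incident (x : (ι → F) × F) :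
    𝔼 y, iverson (Incident x y) = 1 / Fintype.card F :=
  expect_iverson_map_eq _ (incidenceHom_surjective x.1) x.2

lemma expect_incident_mul {x x' : (ι → F) × F} (h : x.1 ≠ x'.1) :
    𝔼 y, iverson (Incident x y) * iverson (Incident x' y) = (1 / Fintype.card F : ℝ) ^ 2 := by
  have hcard := expect_iverson_map_eq _ (incidenceHom_prod_surjective h) (x.2, x'.2)
  simp only [AddMonoidHom.prod_apply, Prod.mk.injEq, iverson_and, Fintype.card_prod,
    Nat.cast_mul] at hcard
  exact hcard.trans (by ring)

lemma expect_incident_sub_mul_le (x x' : (ι → F) × F) :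
    𝔼 y, (iverson (Incident x y) - 1 / Fintype.card F) *
      (iverson (Incident x' y) - 1 / Fintype.card F) ≤ iverson (x'.1 = x.1) := by
  set δ : ℝ := 1 / Fintype.card F
  by_cases h : x.1 = x'.1
  · rw [iverson_of h.symm]
    refine expect_le univ_nonempty fun y _ => ?_
    have hδ : 0 ≤ δ ∧ δ ≤ 1 :=
      ⟨by positivity, by simpa [δ] using Nat.cast_inv_le_one (Fintype.card F)⟩
    have habs (p : Prop) : |iverson p - δ| ≤ 1 :=
      abs_sub_le_iff.2 ⟨by linarith [(iverson_mem_Icc p).2], by linarith [(iverson_mem_Icc p).1]⟩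
    refine (le_abs_self _).trans ?_
    simpa [abs_mul] using mul_le_one₀ (habs _) (abs_nonneg _) (habs _)
  · rw [iverson_of_not (Ne.symm h)]
    have hexpand (y : (ι → F) × F) :
        (iverson (Incident x y) - δ) * (iverson (Incident x' y) - δ) =
          iverson (Incident x y) * iverson (Incident x' y) -
            (δ * iverson (Incident x y) + δ * iverson (Incident x' y)) + δ ^ 2 := by ring
    simp only [hexpand, expect_add_distrib, expect_sub_distrib, ← mul_expect, expect_incident,
      expect_incident_mul h, Fintype.expect_const]
    apply le_of_eq
    ring

lemma lowerQuasirandom_incident {κ : ℝ} (hκ : 0 ≤ κ)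
    (h : 1 / (Fintype.card F : ℝ) ^ Fintype.card ι ≤ κ ^ 2) :
    LowerQuasirandom (fun x y : (ι → F) × F => iverson (Incident x y)) (1 / Fintype.card F) κ := by
  refine lowerQuasirandom_of_codegree hκ (fun _ _ => iverson_nonneg _)
    expect_incident_sub_mul_le ?_
  refine expect_le univ_nonempty fun x _ => ?_
  have hfst := expect_iverson_map_eq (AddMonoidHom.fst (ι → F) F) Prod.fst_surjective x.1
  simpa using hfst.trans_le (by simpa using h)

lemma exists_regular_lowerQuasirandom {p : ℕ} (hp : p.Prime) {κ : ℝ} (hκ : 0 < κ) :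
    ∃ (X : Type) (_ : Fintype X) (_ : Nonempty X) (N : X → X → Prop),
      (∀ x y, N x y → N y x) ∧ 1 / (Fintype.card X : ℝ) ≤ κ ∧ (∀ x, 𝔼 y, iverson (N x y) = 1 / p) ∧
      LowerQuasirandom (fun x y => iverson (N x y)) (1 / p) κ := by
  have : Fact p.Prime := ⟨hp⟩
  have hp1 : (1 : ℝ) < p := by exact_mod_cast hp.one_lt
  obtain ⟨d, hd⟩ := exists_pow_lt_of_lt_one (lt_min hκ (pow_pos hκ 2)) (inv_lt_one_of_one_lt₀ hp1)
  rw [lt_min_iff, inv_pow, ← one_div] at hd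
  refine ⟨(Fin d → ZMod p) × ZMod p, inferInstance, inferInstance, Incident,
    fun _ _ => Incident.symm, ?_, fun x => ?_, ?_⟩
  · refine le_trans ?_ hd.1.le
    gcongr
    simpa [Nat.cast_mul] using le_mul_of_one_le_right (by positivity) hp1.le
  · simpa using expect_incident x
  · simpa using lowerQuasirandom_incident (ι := Fin d) (F := ZMod p) hκ.le (by simpa using hd.2.le)

end Incidence

section Insertion

open Finset Function
open scoped BigOperators

variable {ι : Type*} {Z : ι → Type*} {W : ∀ i j, Z i → Z j → ℝ}
  (hW : ∀ i j a b, W i j a b = W j i b a)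

/-- The weight `W i j (z i) (z j)` of the unordered pair `s(i, j)`. -/
def pairWeight (z : ∀ i, Z i) : Sym2 ι → ℝ :=
  Sym2.lift ⟨fun i j => W i j (z i) (z j), fun _ _ => hW ..⟩

lemma pairWeight_update [DecidableEq ι] {u : ι} {e : Sym2 ι} (hu : u ∉ e) (z : ∀ i, Z i) (a : Z u) :
    pairWeight hW (update z u a) e = pairWeight hW z e := by
  induction e with | _ i j
  obtain ⟨hi, hj⟩ : u ≠ i ∧ u ≠ j := by simpa using hu
  simp [pairWeight, hi.symm, hj.symm]

lemma prod_pairWeight_mem_Icc (hW01 : ∀ i j a b, W i j a b ∈ Set.Icc 0 1)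
    (z : ∀ i, Z i) (T : Finset (Sym2 ι)) : ∏ e ∈ T, pairWeight hW z e ∈ Set.Icc 0 1 := by
  have hmem (e : Sym2 ι) : pairWeight hW z e ∈ Set.Icc 0 1 := by
    induction e with | _ i j
    exact hW01 ..
  exact ⟨prod_nonneg fun e _ => (hmem e).1,
    prod_le_one (fun e _ => (hmem e).1) fun e _ => (hmem e).2⟩

variable [Fintype ι] [DecidableEq ι] [∀ i, Fintype (Z i)] [∀ i, Nonempty (Z i)]

/-- Resampling the coordinates `u` and `v` of `z` turns `A z * B z` into a weighted rectangle. -/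
lemma LowerQuasirandom.mul_expect_sub_le {u v : ι} (huv : u ≠ v) {K : Z u → Z v → ℝ} {δ κ : ℝ}
    (hK : LowerQuasirandom K δ κ) {A B : (∀ i, Z i) → ℝ} (hA : ∀ z, A z ∈ Set.Icc 0 1)
    (hB : ∀ z, B z ∈ Set.Icc 0 1) (hAv : ∀ z b, A (update z v b) = A z)
    (hBu : ∀ z a, B (update z u a) = B z) :
    δ * 𝔼 z, A z * B z - κ ≤ 𝔼 z, A z * B z * K (z u) (z v) := by
  have hrect (z : ∀ i, Z i) :
      -κ ≤ 𝔼 a, 𝔼 b, A (update z u a) * B (update z v b) * (K a b - δ) :=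
    hK _ _ (fun _ => hA _) fun _ => hB _
  have hresample : -κ ≤ 𝔼 z, A z * B z * (K (z u) (z v) - δ) := by
    rw [← expect_expect_update v, ← expect_expect_update u]
    refine le_expect univ_nonempty fun z _ => (hrect z).trans_eq ?_
    refine expect_congr rfl fun a _ => expect_congr rfl fun b _ => ?_
    rw [hAv, update_comm huv, hBu, update_self, update_of_ne huv.symm, update_self]
  simp only [mul_sub, expect_sub_distrib, ← expect_mul] at hresample
  linarith

variable (hW01 : ∀ i j a b, W i j a b ∈ Set.Icc 0 1) {δ κ : ℝ}
include hW01

lemma mul_expect_prod_sub_le_expect_prod_insert {u v : ι} (huv : u ≠ v)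
    (hK : LowerQuasirandom (W u v) δ κ) {T : Finset (Sym2 ι)} (hT : s(u, v) ∉ T) :
    δ * 𝔼 z, ∏ e ∈ T, pairWeight hW z e - κ ≤
      𝔼 z, ∏ e ∈ insert s(u, v) T, pairWeight hW z e := by
  have hsplit (z : ∀ i, Z i) := (prod_filter_mul_prod_filter_not T (u ∈ ·) (pairWeight hW z)).symm
  have hinsert (z : ∀ i, Z i) : ∏ e ∈ insert s(u, v) T, pairWeight hW z e =
      (∏ e ∈ T, pairWeight hW z e) * W u v (z u) (z v) := by
    rw [prod_insert hT, mul_comm]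
    rfl
  simp only [hinsert, hsplit]
  refine hK.mul_expect_sub_le huv (fun z => prod_pairWeight_mem_Icc hW hW01 z _)
    (fun z => prod_pairWeight_mem_Icc hW hW01 z _) (fun z b => prod_congr rfl fun e he => ?_)
    fun z a => prod_congr rfl fun e he => pairWeight_update hW (mem_filter.1 he).2 z a
  obtain ⟨heT, hue⟩ := mem_filter.1 he
  refine pairWeight_update hW (fun hve => hT ?_) z b
  rwa [← (Sym2.mem_and_mem_iff huv).1 ⟨hue, hve⟩]

lemma pow_mul_expect_prod_sub_le_expect_prod_union (hδ : δ ∈ Set.Icc 0 1) (hκ : 0 ≤ κ)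
    {D T : Finset (Sym2 ι)} (hDT : Disjoint D T)
    (hD : ∀ i j, s(i, j) ∈ D → i ≠ j ∧ LowerQuasirandom (W i j) δ κ) :
    δ ^ #D * 𝔼 z, ∏ e ∈ T, pairWeight hW z e - #D * κ ≤
      𝔼 z, ∏ e ∈ D ∪ T, pairWeight hW z e := by
  induction D using Finset.induction_on with
  | empty => simp
  | insert e D he ih =>
    induction e with | _ u v
    rw [disjoint_insert_left] at hDT
    obtain ⟨huv, hK⟩ := hD u v (mem_insert_self ..)
    have hstep := mul_expect_prod_sub_le_expect_prod_insert hW hW01 huv hK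
      (T := D ∪ T) (by simp [he, hDT.1])
    have hind := ih hDT.2 fun i j hij => hD i j (mem_insert_of_mem hij)
    rw [insert_union, card_insert_of_notMem he, Nat.cast_succ, pow_succ]
    calc δ ^ #D * δ * 𝔼 z, ∏ e ∈ T, pairWeight hW z e - (#D + 1) * κ
        ≤ δ * (δ ^ #D * 𝔼 z, ∏ e ∈ T, pairWeight hW z e - #D * κ) - κ := by
          nlinarith [mul_nonneg (sub_nonneg.2 hδ.2) (mul_nonneg (Nat.cast_nonneg' #D) hκ)]
      _ ≤ δ * 𝔼 z, ∏ e ∈ D ∪ T, pairWeight hW z e - κ := by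
          gcongr
          exact hδ.1
      _ ≤ _ := hstep

end Insertion

section Counting

open Finset Function
open scoped BigOperators

variable {t : ℕ} {S : Type*} [Fintype S] [DecidableEq S] {Y : Fin t → Type*} [∀ i, Fintype (Y i)]
  [∀ i, Nonempty (Y i)] {θ η : ℝ}

lemma pow_le_expect_iverson_blowup {R : ∀ i j, Y i → Y j → Prop} (hη : 0 ≤ η) (hθ : 0 ≤ θ)
    (hηθ : η ≤ 1 - ((t : ℝ) - 1) * θ) (hR : ∀ i j, i < j → ∀ b, 𝔼 a, iverson (¬R i j a b) ≤ θ) :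
    (η ^ t) ^ Fintype.card S ^ t ≤ 𝔼 z : ∀ p : Fin t × S, Y p.1,
      iverson (∀ p q : Fin t × S, p.1 < q.1 → R p.1 q.1 (z p) (z q)) := by
  let uncurry : (∀ i, S → Y i) ≃ (∀ p : Fin t × S, Y p.1) :=
    ⟨fun z p => z p.1 p.2, fun z i s => z (i, s), fun _ => rfl, fun _ => rfl⟩
  calc (η ^ t) ^ Fintype.card S ^ t
      ≤ (𝔼 y, iverson (IsTransversalClique R y)) ^ Fintype.card S ^ t := by
        gcongr
        exact pow_le_expect_isTransversalClique hη hθ hR hηθ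
    _ ≤ 𝔼 z : ∀ i, S → Y i,
          ∏ σ : Fin t → S, iverson (IsTransversalClique R fun i => z i (σ i)) :=
        pow_expect_le_expect_prod fun _ => iverson_nonneg _
    _ = 𝔼 z : ∀ i, S → Y i,
          iverson (∀ σ : Fin t → S, IsTransversalClique R fun i => z i (σ i)) := by
        simp only [iverson_forall]
    _ ≤ 𝔼 z : ∀ i, S → Y i, iverson (∀ p q : Fin t × S, p.1 < q.1 →
          R p.1 q.1 (z p.1 p.2) (z q.1 q.2)) := by
        refine expect_le_expect fun z _ => iverson_le_of_imp (iverson_nonneg _) fun h => ?_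
        refine (iverson_of fun p q hpq => ?_).ge
        simpa [hpq.ne] using h (update (fun _ => p.2) q.1 q.2) p.1 q.1 hpq
    _ = _ := Fintype.expect_equiv uncurry _ _ fun _ => rfl

lemma exists_adj_and_adj_compl {H : SimpleGraph (Fin t × S)} [DecidableRel H.Adj]
    (hH : ∀ p q, H.Adj p q → p.1 ≠ q.1) {R L : SimpleGraph (Σ i, Y i)} {δ κ : ℝ}
    (hη : 0 ≤ η) (hθ : 0 ≤ θ) (hδ : δ ∈ Set.Icc 0 1) (hκ : 0 ≤ κ)
    (hηθ : η ≤ 1 - ((t : ℝ) - 1) * θ)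
    (hR : ∀ i j, i < j → ∀ b, 𝔼 a, iverson (¬R.Adj ⟨i, a⟩ ⟨j, b⟩) ≤ θ)
    (hL : ∀ i j, LowerQuasirandom (fun a b => iverson (L.Adj ⟨i, a⟩ ⟨j, b⟩)) δ κ)
    (hκη : #Hᶜ.edgeFinset * κ < δ ^ #Hᶜ.edgeFinset * (η ^ t) ^ Fintype.card S ^ t) :
    ∃ z : ∀ p : Fin t × S, Y p.1,
      (∀ p q, H.Adj p q → R.Adj ⟨p.1, z p⟩ ⟨q.1, z q⟩) ∧
      ∀ p q, Hᶜ.Adj p q → L.Adj ⟨p.1, z p⟩ ⟨q.1, z q⟩ := by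
  let W (p q : Fin t × S) (a : Y p.1) (b : Y q.1) : ℝ :=
    iverson (if H.Adj p q then R.Adj ⟨p.1, a⟩ ⟨q.1, b⟩ else L.Adj ⟨p.1, a⟩ ⟨q.1, b⟩)
  have hW (p q a b) : W p q a b = W q p b a := by simp only [W, SimpleGraph.adj_comm]
  have hbase : (η ^ t) ^ Fintype.card S ^ t ≤
      𝔼 z, ∏ e ∈ H.edgeFinset, pairWeight hW z e := by
    refine (pow_le_expect_iverson_blowup hη hθ hηθ hR).trans (expect_le_expect fun z _ => ?_)
    refine iverson_le_of_imp (prod_pairWeight_mem_Icc hW (fun _ _ _ _ => iverson_mem_Icc _) _ _).1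
      fun h => (prod_eq_one fun e he => ?_).ge
    induction e with | _ p q
    rw [mem_edgeFinset, mem_edgeSet] at he
    refine iverson_of ?_
    rw [if_pos he]
    exact (hH p q he).lt_or_gt.elim (h p q) fun hqp => (h q p hqp).symm
  have hquasi (p q) (hpq : s(p, q) ∈ Hᶜ.edgeFinset) : p ≠ q ∧ LowerQuasirandom (W p q) δ κ := by
    rw [mem_edgeFinset, mem_edgeSet, compl_adj] at hpq
    simpa [W, hpq] using hL p.1 q.1
  have hpos : 0 < 𝔼 z, ∏ e ∈ Hᶜ.edgeFinset ∪ H.edgeFinset, pairWeight hW z e :=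
    calc 0 < δ ^ #Hᶜ.edgeFinset * (η ^ t) ^ Fintype.card S ^ t - #Hᶜ.edgeFinset * κ :=
          sub_pos.2 hκη
      _ ≤ δ ^ #Hᶜ.edgeFinset * 𝔼 z, ∏ e ∈ H.edgeFinset, pairWeight hW z e -
            #Hᶜ.edgeFinset * κ := by
          have := hδ.1
          gcongr
      _ ≤ _ := pow_mul_expect_prod_sub_le_expect_prod_union hW (fun _ _ _ _ => iverson_mem_Icc _)
          hδ hκ (disjoint_edgeFinset.2 isCompl_compl.disjoint.symm) hquasi
  obtain ⟨z, -, hz⟩ := exists_ne_zero_of_expect_ne_zero hpos.ne'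
  rw [prod_ne_zero_iff] at hz
  have hadj {p q} (hpq : p ≠ q) :
      if H.Adj p q then R.Adj ⟨p.1, z p⟩ ⟨q.1, z q⟩ else L.Adj ⟨p.1, z p⟩ ⟨q.1, z q⟩ :=
    by_contra fun h => hz s(p, q) (by simp [hpq, em']) (iverson_of_not h)
  exact ⟨z, fun p q h => by simpa [h] using hadj h.ne, fun p q h => by
    simpa [(compl_adj ..).1 h] using hadj h.ne⟩

end Counting

section Host

open Finset Function
open scoped BigOperators

variable {V α : Type*} {F : SimpleGraph V}

/-- The subgraph of `F` formed by the edges of color `b`. -/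
def colorClass (F : SimpleGraph V) (c : Sym2 V → Bool) (b : Bool) : SimpleGraph V where
  Adj v w := F.Adj v w ∧ c s(v, w) = b
  symm := ⟨fun _ _ h => ⟨h.1.symm, Sym2.eq_swap ▸ h.2⟩⟩
  loopless := ⟨fun _ h => h.1.ne rfl⟩

lemma colorClass_le (F : SimpleGraph V) (c : Sym2 V → Bool) (b : Bool) : colorClass F c b ≤ F :=
  fun _ _ h => h.1

lemma exists_embedding_of_adj_of_adj_compl {H : SimpleGraph α} {f : α → V}
    (hadj : ∀ u v, H.Adj u v → F.Adj (f u) (f v))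
    (hcompl : ∀ u v, Hᶜ.Adj u v → Fᶜ.Adj (f u) (f v)) : ∃ g : H ↪g F, ⇑g = f := by
  have hnot {u v} (huv : u ≠ v) (h : ¬H.Adj u v) := (compl_adj ..).1 (hcompl u v ⟨huv, h⟩)
  have hinj : Injective f := fun u v huv => by
    by_contra hne
    by_cases h : H.Adj u v
    · exact (hadj u v h).ne huv
    · exact (hnot hne h).1 huv
  refine ⟨⟨⟨f, hinj⟩, fun {u v} => ⟨fun h => ?_, hadj u v⟩⟩, rfl⟩
  by_contra hH
  exact (hnot (fun huv => h.ne (congrArg f huv)) hH).2 h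

lemma exists_starGraph_embedding {B : SimpleGraph V} (hBF : B ≤ F) {v : V} {s : Finset V} {n : ℕ}
    (hn : n ≤ #s) (hB : ∀ w ∈ s, B.Adj v w) (hs : F.IsIndepSet s) :
    ∃ g : StarGraph n ↪g F, ∀ a b, (StarGraph n).Adj a b → B.Adj (g a) (g b) := by
  let leaf : Fin n ↪ s := (Fin.castLEEmb hn).trans s.equivFin.symm.toEmbedding
  let f : Fin 1 ⊕ Fin n → V := Sum.elim (fun _ => v) fun i => leaf i
  have hf : ∀ a b, (StarGraph n).Adj a b → B.Adj (f a) (f b) := by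
    rintro (a | i) (b | j) h
    · simp [StarGraph] at h
    · exact hB _ (leaf j).2
    · exact (hB _ (leaf i).2).symm
    · simp [StarGraph] at h
  have hf_compl : ∀ a b, (StarGraph n)ᶜ.Adj a b → Fᶜ.Adj (f a) (f b) := by
    rintro (a | i) (b | j) h
    · simp [Subsingleton.elim a b] at h
    · simp [StarGraph] at h
    · simp [StarGraph] at h
    · have hij : (leaf i : V) ≠ leaf j := by simpa [Subtype.coe_inj] using h.ne
      exact ⟨hij, hs (leaf i).2 (leaf j).2 hij⟩
  obtain ⟨g, hg⟩ := exists_embedding_of_adj_of_adj_compl (fun a b h => hBF (hf a b h)) hf_compl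
  exact ⟨g, hg ▸ hf⟩

variable {ι X : Type*} {N : X → X → Prop} (hN : ∀ x y, N x y → N y x) (M : ι → Type*)

/-- The host graph: the complete multipartite graph with layers `X × M i`, from which the pairs
lying over `N`-related points of `X` are removed. -/
def layeredGraph : SimpleGraph (Σ i, X × M i) where
  Adj v w := v.1 ≠ w.1 ∧ ¬N v.2.1 w.2.1
  symm := ⟨fun _ _ h => ⟨h.1.symm, fun hwv => h.2 (hN _ _ hwv)⟩⟩
  loopless := ⟨fun _ h => h.1 rfl⟩

lemma isIndepSet_map_sigmaMk {i : ι} (s : Finset (X × M i)) :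
    (layeredGraph hN M).IsIndepSet (s.map (.sigmaMk i) : Finset (Σ i, X × M i)) := by
  intro v hv w hw _ hvw
  obtain ⟨a, -, rfl⟩ := mem_map.1 hv
  obtain ⟨b, -, rfl⟩ := mem_map.1 hw
  exact hvw.1 rfl

variable [Fintype X] [Nonempty X] [∀ i, Fintype (M i)] [∀ i, Nonempty (M i)] {δ κ : ℝ}

lemma lowerQuasirandom_layeredGraph_compl (hδ : δ ≤ 1) (hX : 1 / (Fintype.card X : ℝ) ≤ κ)
    (hK : LowerQuasirandom (fun x y => iverson (N x y)) δ κ) (i j : ι) :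
    LowerQuasirandom (fun a b => iverson ((layeredGraph hN M)ᶜ.Adj ⟨i, a⟩ ⟨j, b⟩)) δ κ := by
  obtain rfl | hij := eq_or_ne i j
  · have hcard : 1 / (Fintype.card (X × M i) : ℝ) ≤ κ := by
      refine le_trans ?_ hX
      gcongr
      rw [Fintype.card_prod]
      exact Nat.le_mul_of_pos_right _ Fintype.card_pos
    simpa [layeredGraph] using lowerQuasirandom_ne hδ hcard
  · simpa [layeredGraph, hij] using hK.comp_fst (S := M i) (T := M j)

lemma expect_not_adj_colorClass_le {n : ℕ} (hreg : ∀ x, 𝔼 y, iverson (N x y) = δ)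
    {c : Sym2 (Σ i, X × M i) → Bool}
    (hstar : ¬∃ g : StarGraph n ↪g layeredGraph hN M,
      ∀ a b, (StarGraph n).Adj a b → c s(g a, g b) = false) {i j : ι} (hij : i ≠ j) (b : X × M j) :
    𝔼 a, iverson (¬(colorClass (layeredGraph hN M) c true).Adj ⟨i, a⟩ ⟨j, b⟩) ≤
      n / (Fintype.card X * Fintype.card (M i)) + δ := by
  classical
  let blue : Finset (X × M i) := {a | (colorClass (layeredGraph hN M) c false).Adj ⟨j, b⟩ ⟨i, a⟩}
  have hblue : #blue ≤ n := by
    by_contra! hn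
    obtain ⟨g, hg⟩ := exists_starGraph_embedding (colorClass_le _ c false) (n := n)
      (s := blue.map (.sigmaMk i)) (by simpa using hn.le)
      (forall_mem_map.2 fun a ha => (mem_filter_univ a).1 ha)
      (isIndepSet_map_sigmaMk hN M blue)
    exact hstar ⟨g, fun a b h => (hg a b h).2⟩
  have hcover (a : X × M i) :
      iverson (¬(colorClass (layeredGraph hN M) c true).Adj ⟨i, a⟩ ⟨j, b⟩) ≤
        iverson (a ∈ blue) + iverson (N b.1 a.1) := by
    refine iverson_le_of_imp (add_nonneg (iverson_nonneg _) (iverson_nonneg _)) fun h => ?_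
    by_cases hba : N b.1 a.1
    · linarith [iverson_of hba, iverson_nonneg (a ∈ blue)]
    · have ha : a ∈ blue := by
        rw [mem_filter_univ, SimpleGraph.adj_comm]
        simpa [colorClass, layeredGraph, hij, mt (hN _ _) hba] using h
      linarith [iverson_of ha, iverson_nonneg (N b.1 a.1)]
  calc 𝔼 a, iverson (¬(colorClass (layeredGraph hN M) c true).Adj ⟨i, a⟩ ⟨j, b⟩)
      ≤ 𝔼 a, (iverson (a ∈ blue) + iverson (N b.1 a.1)) := expect_le_expect fun a _ => hcover a
    _ = #blue / (Fintype.card X * Fintype.card (M i)) + δ := by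
        rw [expect_add_distrib, expect_iverson_mem, expect_comp_fst fun x => iverson (N b.1 x),
          hreg, Fintype.card_prod, Nat.cast_mul]
    _ ≤ n / (Fintype.card X * Fintype.card (M i)) + δ := by gcongr

lemma arrowsInd_layeredGraph {S : Type*} [Fintype S] [DecidableEq S] {t n : ℕ} {M : Fin t → Type*}
    [∀ i, Fintype (M i)] [∀ i, Nonempty (M i)] {H : SimpleGraph (Fin t × S)} [DecidableRel H.Adj]
    (hH : ∀ p q, H.Adj p q → p.1 ≠ q.1) (hreg : ∀ x, 𝔼 y, iverson (N x y) = δ)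
    (hX : 1 / (Fintype.card X : ℝ) ≤ κ)
    (hK : LowerQuasirandom (fun x y => iverson (N x y)) δ κ) {θ η : ℝ} (hη : 0 ≤ η) (hθ : 0 ≤ θ)
    (hηθ : η ≤ 1 - ((t : ℝ) - 1) * θ)
    (hM : ∀ i j, i < j → n / (Fintype.card X * Fintype.card (M i)) + δ ≤ θ)
    (hκη : #Hᶜ.edgeFinset * κ < δ ^ #Hᶜ.edgeFinset * (η ^ t) ^ Fintype.card S ^ t) :
    ArrowsInd (layeredGraph hN M) H (StarGraph n) := by
  intro c
  refine or_iff_not_imp_right.2 fun hstar => ?_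
  have hδ : δ ∈ Set.Icc 0 1 :=
    hreg (Classical.arbitrary X) ▸ expect_mem_Icc fun _ => iverson_mem_Icc _
  obtain ⟨z, hred, hcompl⟩ := exists_adj_and_adj_compl hH
    (R := colorClass (layeredGraph hN M) c true) hη hθ hδ (le_trans (by positivity) hX) hηθ
    (fun i j hij b => (expect_not_adj_colorClass_le hN M hreg hstar hij.ne b).trans (hM i j hij))
    (lowerQuasirandom_layeredGraph_compl hN M hδ.2 hX hK) hκη
  obtain ⟨g, hg⟩ := exists_embedding_of_adj_of_adj_compl
    (fun p q hpq => colorClass_le _ c true (hred p q hpq)) hcompl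
  exact ⟨g, fun p q hpq => hg ▸ (hred p q hpq).2⟩

end Host

section Transfer

variable {V α β : Type*} {F : SimpleGraph V} {H : SimpleGraph α} {G : SimpleGraph β}

lemma ArrowsInd.congr_host {V' : Type*} {F' : SimpleGraph V'} (h : ArrowsInd F H G) (e : F ≃g F') :
    ArrowsInd F' H G := by
  intro c
  refine (h fun s => c (s.map e)).imp ?_ ?_ <;> rintro ⟨f, hf⟩ <;>
    exact ⟨e.toEmbedding.comp f, hf⟩

lemma ArrowsInd.of_embedding {α' : Type*} {H' : SimpleGraph α'} (h : ArrowsInd F H' G)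
    (e : H ↪g H') : ArrowsInd F H G := by
  intro c
  refine (h c).imp_left ?_
  rintro ⟨f, hf⟩
  exact ⟨f.comp e, fun u v huv => hf _ _ (e.map_adj_iff.2 huv)⟩

lemma ArrowsInd.IR_le_card [Fintype V] (h : ArrowsInd F H G) : IR H G ≤ Fintype.card V :=
  Nat.sInf_le ⟨_, h.congr_host (F.overFinIso rfl)⟩

lemma exists_partite_embedding {ι : Type*} (C : H.Coloring ι) :
    ∃ H' : SimpleGraph (ι × α), (∀ p q, H'.Adj p q → p.1 ≠ q.1) ∧ Nonempty (H ↪g H') := by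
  let f : α ↪ ι × α := ⟨fun u => (C u, u), fun _ _ h => congrArg Prod.snd h⟩
  refine ⟨H.map f, ?_, ⟨SimpleGraph.Embedding.map f H⟩⟩
  rintro _ _ ⟨-, u, v, huv, rfl, rfl⟩
  exact C.valid huv

end Transfer

section Bound

open Finset Fintype

lemma exists_prime_mul_add_lt_one (ρ : ℕ) {β : ℝ} (hβ : 0 < β) :
    ∃ p : ℕ, p.Prime ∧ ρ * (1 / (ρ + β) + 1 / p) < 1 := by
  obtain ⟨p, hp_ge, hp⟩ := Nat.exists_infinite_primes (⌈ρ * (ρ + β) / β⌉₊ + 1)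
  refine ⟨p, hp, ?_⟩
  have hp0 : (0 : ℝ) < p := by exact_mod_cast hp.pos
  have hp_lt : ρ * (ρ + β) / β < p := Nat.lt_of_ceil_lt hp_ge
  rw [div_lt_iff₀ hβ] at hp_lt
  have hρβ : 0 < ρ + β := by positivity
  rw [div_add_div _ _ hρβ.ne' hp0.ne', mul_div_assoc', div_lt_one (by positivity)]
  linarith

/-- Here `M * m` is the number of vertices of each large layer, and `M` that of the bounded one. -/
lemma exists_IR_le_mul {α : Type*} [Finite α] {H : SimpleGraph α} {ρ : ℕ}
    (hH : H.Colorable (ρ + 1)) {β : ℝ} (hβ : 0 < β) :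
    ∃ M : ℕ, 0 < M ∧ ∀ n m : ℕ, 0 < m → (ρ + β) * n ≤ M * m →
      IR H (StarGraph n) ≤ M * (ρ * m + 1) := by
  classical
  cases nonempty_fintype α
  obtain ⟨H', hH', ⟨e⟩⟩ := exists_partite_embedding hH.some
  obtain ⟨p, hp, hθ⟩ := exists_prime_mul_add_lt_one ρ hβ
  have hp0 : (0 : ℝ) < p := by exact_mod_cast hp.pos
  have hη := sub_pos.2 hθ
  obtain ⟨κ, hκ, hκη⟩ := exists_pos_mul_lt (show 0 < (1 / p : ℝ) ^ #H'ᶜ.edgeFinset *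
    ((1 - ρ * (1 / (ρ + β) + 1 / p)) ^ (ρ + 1)) ^ card α ^ (ρ + 1) by positivity)
    #H'ᶜ.edgeFinset
  obtain ⟨X, _, _, N, hN, hX, hreg, hK⟩ := exists_regular_lowerQuasirandom hp hκ
  refine ⟨card X, card_pos, fun n m hm hnm => ?_⟩
  let size : Fin (ρ + 1) → ℕ := Fin.snoc (fun _ => m) 1
  have hsize (i) : NeZero (size i) :=
    ⟨by cases i using Fin.lastCases <;> simp [size, hm.ne']⟩
  have hlayer (i j : Fin (ρ + 1)) (hij : i < j) :
      n / (card X * card (Fin (size i))) + 1 / p ≤ (1 / (ρ + β) + 1 / p : ℝ) := by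
    obtain ⟨i, rfl⟩ := Fin.exists_castSucc_eq.2 (hij.trans_le (Fin.le_last j)).ne
    rw [Fintype.card_fin, show size i.castSucc = m by simp [size]]
    gcongr ?_ + _
    rw [div_le_div_iff₀ (by positivity) (by positivity)]
    linarith
  have harrow := arrowsInd_layeredGraph hN hH' hreg hX hK hη.le (by positivity)
    (by push_cast; linarith) hlayer hκη
  refine (harrow.of_embedding e).IR_le_card.trans_eq ?_
  simp only [Fintype.card_sigma, card_prod, Fintype.card_fin, Fin.sum_univ_castSucc,
    Fin.snoc_castSucc, sum_const, card_univ, smul_eq_mul, Fin.snoc_last, mul_one, size]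
  ring

lemma exists_layer_size (ρ : ℕ) {M : ℕ} (hM : 0 < M) {γ : ℝ} (hγ : 0 < γ) :
    ∃ n₀ : ℕ, ∀ n : ℕ, n₀ < n → ∃ m : ℕ, 0 < m ∧ (ρ + γ / (2 * (ρ + 1))) * n ≤ M * m ∧
      (M * (ρ * m + 1) : ℝ) ≤ (ρ : ℝ) ^ 2 * n + γ * n := by
  set β : ℝ := γ / (2 * (ρ + 1))
  have hM' : (0 : ℝ) < M := by exact_mod_cast hM
  refine ⟨⌈2 * (ρ + 1) * M / γ⌉₊, fun n hn => ?_⟩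
  have hn0 : (0 : ℝ) < n := by exact_mod_cast Nat.zero_lt_of_lt hn
  have hn_gt : 2 * (ρ + 1) * M < γ * n := (div_lt_iff₀' hγ).1 (Nat.lt_of_ceil_lt hn)
  have hm_ge := (div_le_iff₀' hM').1 (Nat.le_ceil ((ρ + β) * n / M))
  have hm_lt := Nat.ceil_lt_add_one (a := (ρ + β) * n / M) (by positivity)
  refine ⟨⌈(ρ + β) * n / M⌉₊, Nat.ceil_pos.2 (by positivity), hm_ge, ?_⟩
  calc (M * (ρ * ⌈(ρ + β) * n / M⌉₊ + 1) : ℝ)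
      ≤ M * (ρ * ((ρ + β) * n / M + 1) + 1) := by gcongr
    _ = ρ ^ 2 * n + (ρ * γ / (ρ + 1) * n + 2 * (ρ + 1) * M) / 2 := by
        simp only [β]
        field_simp
        ring
    _ ≤ ρ ^ 2 * n + (γ * n + γ * n) / 2 := by
        gcongr
        rw [div_le_iff₀ (by positivity)]
        linarith
    _ = ρ ^ 2 * n + γ * n := by ring

end Bound

/-- for γ > 0 and H with an edge and chromatic number r, for all
sufficiently large n, IR(H, K_{1,n}) ≤ (r−1)²·n + γ·n. -/
theorem IR_upper_chromatic (γ : ℝ) (hγ : 0 < γ) (k : ℕ) (H : SimpleGraph (Fin k))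
    (hedge : ∃ u v, H.Adj u v) (r : ℕ) (hr : H.chromaticNumber = r) :
    ∃ n₀ : ℕ, ∀ n : ℕ, n₀ < n →
      (IR H (StarGraph n) : ℝ) ≤ ((r : ℝ) - 1) ^ 2 * n + γ * n := by
  have hcol : H.Colorable r := chromaticNumber_le_iff_colorable.1 hr.le
  obtain ⟨ρ, rfl⟩ : ∃ ρ, r = ρ + 1 := by
    obtain ⟨u, -⟩ := hedge
    exact Nat.exists_eq_add_one.2 (hcol.some u).pos
  obtain ⟨M, hM, hIR⟩ := exists_IR_le_mul hcol (β := γ / (2 * (ρ + 1))) (by positivity)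
  obtain ⟨n₀, hn₀⟩ := exists_layer_size ρ hM hγ
  refine ⟨n₀, fun n hn => ?_⟩
  obtain ⟨m, hm, hnm, hMm⟩ := hn₀ n hn
  rw [Nat.cast_succ, add_sub_cancel_right]
  exact le_trans (by exact_mod_cast hIR n m hm hnm) hMm
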